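/- arXiv:1210.0450 — 10 statements merged into one kernel-verified Lean document; each statement's English description precedes it below -/
import Mathlib

section
/- If n and m are distinct perfect numbers and δ = |n - m|, then δ does not divide n. -/
theorem aux_sigma (n : ℕ) (hn : Nat.Perfect n) : ∑ i ∈ n.divisors, i = 2 * n :=
  (Nat.perfect_iff_sum_divisors_eq_two_mul hn.2).1 hn

theorem aux_sum_mul (a b : ℕ) (h : Nat.Coprime a b) :
    ∑ i ∈ (a * b).divisors, i = (∑ i ∈ a.divisors, i) * ∑ i ∈ b.divisors, i := by
  have := (ArithmeticFunction.isMultiplicative_sigma (k := 1)).map_mul_of_coprime h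
  simpa [ArithmeticFunction.sigma_one_apply] using this

theorem aux_even (n : ℕ) (hn : Nat.Perfect n) (he : Even n) :
    ∃ k p : ℕ, 1 ≤ k ∧ p.Prime ∧ p + 1 = 2 ^ (k + 1) ∧ n = 2 ^ k * p := by
  obtain ⟨k, m, hm, rfl⟩ := Nat.exists_eq_two_pow_mul_odd hn.2.ne'
  have hk : 1 ≤ k := by
    rcases Nat.eq_zero_or_pos k with rfl | h
    · simp at he
      exact absurd he (Nat.not_even_iff_odd.2 hm)
    · exact h
  have hs := aux_sigma _ hn
  have hcop : Nat.Coprime (2 ^ k) m := Nat.Coprime.pow_left _ (Nat.coprime_two_left.2 hm)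
  have hgeom : (∑ i ∈ (2 ^ k).divisors, i) + 1 = 2 ^ (k + 1) := by
    rw [Nat.sum_divisors_prime_pow Nat.prime_two]
    have := Nat.geomSum_eq (m := 2) le_rfl (k + 1)
    have h1 : 1 ≤ 2 ^ (k + 1) := Nat.one_le_two_pow
    simp at this
    omega
  rw [aux_sum_mul _ _ hcop] at hs
  set P := ∑ i ∈ (2 ^ k).divisors, i with hP
  rw [Nat.sum_divisors_eq_sum_properDivisors_add_self] at hs
  have hm0 : 0 < m := hm.pos
  have h4 : 4 ≤ 2 ^ (k + 1) := by
    calc 4 = 2 ^ 2 := by norm_num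
      _ ≤ _ := Nat.pow_le_pow_right (by norm_num) (by omega)
  have hs2 : P * (∑ i ∈ m.properDivisors, i) = m := by
    have : 2 * (2 ^ k * m) = P * m + m := by
      rw [← mul_assoc, ← pow_succ', ← hgeom]; ring
    rw [this, mul_add] at hs
    omega
  have hd : (∑ i ∈ m.properDivisors, i) ∣ m := ⟨P, by rw [mul_comm]; exact hs2.symm⟩
  rcases Nat.sum_properDivisors_dvd hd with h | h
  · refine ⟨k, m, hk, Nat.sum_properDivisors_eq_one_iff_prime.1 h, ?_, rfl⟩
    rw [h, mul_one] at hs2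
    rw [← hs2]; exact hgeom
  · rw [h] at hs2
    nlinarith

theorem aux_neg_one (M r : ℕ) (h0 : 0 < M)
    (hr : ∀ x y : ZMod r, x * y = -1 → x + y = 0 ∧ x ≠ y) (h : (M : ZMod r) = -1) :
    ((∑ i ∈ M.divisors, i : ℕ) : ZMod r) = 0 := by
  rw [Nat.cast_sum]
  have key : ∀ a ∈ M.divisors, (a : ZMod r) * ((M / a : ℕ) : ZMod r) = -1 := by
    intro a ha
    rw [← Nat.cast_mul, Nat.mul_div_cancel' (Nat.dvd_of_mem_divisors ha), h]
  refine Finset.sum_involution (fun a _ => M / a) ?_ ?_ ?_ ?_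
  · intro a ha
    exact (hr _ _ (key a ha)).1
  · intro a ha _ h2
    have := (hr _ _ (key a ha)).2
    rw [h2] at this
    exact this rfl
  · intro a ha
    exact Nat.mem_divisors.2 ⟨Nat.div_dvd_of_dvd (Nat.dvd_of_mem_divisors ha), h0.ne'⟩
  · intro a ha
    exact Nat.div_div_self (Nat.dvd_of_mem_divisors ha) h0.ne'

theorem aux_mod3 (M : ℕ) (hM : Nat.Perfect M) : M % 3 ≠ 2 := by
  intro h
  have h1 : (M : ZMod 3) = -1 := by
    have : ((M % 3 : ℕ) : ZMod 3) = M := ZMod.natCast_mod M 3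
    rw [← this, h]; rfl
  have h2 := aux_neg_one M 3 hM.2 (by decide) h1
  rw [aux_sigma M hM, ZMod.natCast_eq_zero_iff] at h2
  omega

theorem aux_mod4 (M : ℕ) (hM : Nat.Perfect M) : M % 4 ≠ 3 := by
  intro h
  have h1 : (M : ZMod 4) = -1 := by
    have : ((M % 4 : ℕ) : ZMod 4) = M := ZMod.natCast_mod M 4
    rw [← this, h]; rfl
  have h2 := aux_neg_one M 4 hM.2 (by decide) h1
  rw [aux_sigma M hM, ZMod.natCast_eq_zero_iff] at h2
  omega

theorem aux_even_even (n m : ℕ) (hn : Nat.Perfect n) (hm : Nat.Perfect m) (he : Even n)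
    (he' : Even m) (hlt : n < m) : 2 * n < m := by
  obtain ⟨a, p, ha, hp, hpa, rfl⟩ := aux_even n hn he
  obtain ⟨b, q, hb, hq, hqb, rfl⟩ := aux_even m hm he'
  have hab : a < b := by
    by_contra! hba
    have h1 : 2 ^ b ≤ 2 ^ a := Nat.pow_le_pow_right (by norm_num) hba
    have h2 : q ≤ p := by rw [pow_succ] at hpa hqb; omega
    exact absurd hlt (not_lt.2 (Nat.mul_le_mul h1 h2))
  have h1 : 2 ^ (a + 1) ≤ 2 ^ b := Nat.pow_le_pow_right (by norm_num) hab
  rw [pow_succ] at hpa hqb h1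
  have h2 : p < q := by omega
  have := hp.pos
  nlinarith

theorem aux_mixed (N M d : ℕ) (hN : Nat.Perfect N) (hM : Nat.Perfect M) (he : Even N)
    (ho : Odd M) (hd : d ∣ N) (h : M = N + d ∨ N = M + d) : False := by
  obtain ⟨k, p, hk, hp, hpk, rfl⟩ := aux_even N hN he
  have hod : Odd d := by
    rcases h with h | h <;> grind
  have hdp : d ∣ p :=
    (Nat.Coprime.pow_right k (Nat.coprime_two_right.2 hod)).dvd_of_dvd_mul_left hd
  have hpk' := hpk
  rw [pow_succ] at hpk'
  have heven : Even (2 ^ k) := (Nat.even_pow.2 ⟨even_two, by omega⟩)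
  rcases (Nat.dvd_prime hp).1 hdp with rfl | rfl
  · have h3 := aux_mod3 M hM
    have h4 := aux_mod4 M hM
    rcases Nat.lt_or_ge k 2 with hk2 | hk2
    · obtain rfl : k = 1 := by omega
      obtain rfl : p = 3 := by omega
      omega
    · have hdvd4 : 4 ∣ 2 ^ k := pow_dvd_pow 2 hk2
      have h40 : 4 ∣ 2 ^ k * p := Dvd.dvd.mul_right hdvd4 p
      have hM1 : M = 2 ^ k * p + 1 := by omega
      rcases Nat.even_or_odd' k with ⟨j, rfl | rfl⟩
      · have h1 : 2 ^ (2 * j) % 3 = 1 := by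
          rw [pow_mul, Nat.pow_mod]; simp
        have h2 : p % 3 = 1 := by omega
        have : (2 ^ (2 * j) * p) % 3 = 1 := by rw [Nat.mul_mod, h1, h2]
        omega
      · have h1 : 2 ^ (2 * j + 1 + 1) % 3 = 1 := by
          rw [show 2 * j + 1 + 1 = 2 * (j + 1) by ring, pow_mul, Nat.pow_mod]; simp
        have h2 : 3 ∣ p := by omega
        have h5 : 3 = p := (Nat.prime_dvd_prime_iff_eq Nat.prime_three hp).1 h2
        omega
  · have fin : ∀ c, M = d * c → ¬ d ∣ c → False := by
      intro c hc hdc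
      have hs := aux_sigma M hM
      rw [hc, aux_sum_mul _ _ ((Nat.Prime.coprime_iff_not_dvd hp).2 hdc),
        Nat.Prime.sum_divisors hp, hpk', ← hc] at hs
      have : 2 ^ k * (∑ i ∈ c.divisors, i) = M := by linarith
      rw [← this] at ho
      exact absurd (heven.mul_right _) (Nat.not_even_iff_odd.2 ho)
    rcases h with h | h
    · by_cases h3 : d = 3
      · subst h3
        have h9 : M = 9 := by omega
        rw [h9] at hM
        exact absurd (aux_sigma 9 hM) (by decide)
      · apply fin (2 ^ k + 1) (by rw [h]; ring)
        intro hdv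
        have h6 : d ∣ d + 3 := by
          rw [show d + 3 = (2 ^ k + 1) * 2 by omega]
          exact hdv.mul_right 2
        have h7 : d ∣ 3 := (Nat.dvd_add_right (dvd_refl d)).1 h6
        exact h3 ((Nat.prime_dvd_prime_iff_eq hp Nat.prime_three).1 h7)
    · have h1 := hp.two_le
      obtain ⟨c, hc⟩ : ∃ c, 2 ^ k = c + 1 := ⟨2 ^ k - 1, by omega⟩
      rw [hc] at h hpk'
      apply fin c (by linarith)
      intro hdv
      have := Nat.le_of_dvd (by omega) hdv
      omega

theorem aux_main (n m d : ℕ) (hn : Nat.Perfect n) (hm : Nat.Perfect m) (h : m = n + d)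
    (hd0 : 0 < d) (hd : d ∣ n) : False := by
  have hdm : d ∣ m := h ▸ (hd.add (dvd_refl d))
  rcases Nat.even_or_odd n with he | ho <;> rcases Nat.even_or_odd m with he' | ho'
  · have := aux_even_even n m hn hm he he' (by omega)
    have := Nat.le_of_dvd hn.2 hd
    omega
  · exact aux_mixed n m d hn hm he ho' hd (Or.inl h)
  · exact aux_mixed m n d hm hn he' ho hdm (Or.inr h)
  · have : Odd d := ho.of_dvd_nat hd
    grind

theorem stmt_0 (n m : ℕ) (hn : Nat.Perfect n) (hm : Nat.Perfect m) (hnm : n ≠ m) :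
    ¬ ((n : ℤ) - m).natAbs ∣ n := by
  intro hd
  rcases Nat.lt_or_gt_of_ne hnm with hlt | hlt
  · exact aux_main n m _ hn hm (by omega) (by omega) hd
  · refine aux_main m n ((n : ℤ) - m).natAbs hm hn (by omega) (by omega) ?_
    have h1 : n = m + ((n : ℤ) - m).natAbs := by omega
    generalize ((n : ℤ) - m).natAbs = d at *
    rw [h1] at hd
    exact (Nat.dvd_add_left (dvd_refl d)).1 hd
end

section
/- Let n and n + δ both be perfect numbers. If δ ≥ 2 is even, then δ does not divide n. -/
theorem even_perfect_form (n : ℕ) (he : Even n) (hp : Nat.Perfect n) :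
    ∃ k, n = 2 ^ k * (2 ^ (k + 1) - 1) := by
  have hpos : 0 < n := hp.2
  have hs : ∑ i ∈ n.divisors, i = 2 * n := (Nat.perfect_iff_sum_divisors_eq_two_mul hpos).1 hp
  obtain ⟨k, m, hm, rfl⟩ := Nat.exists_eq_two_pow_mul_odd hpos.ne'
  have hk : k ≠ 0 := by
    rintro rfl
    simp only [pow_zero, one_mul] at he
    exact (Nat.not_even_iff_odd.2 hm) he
  refine ⟨k, ?_⟩
  have hcop : Nat.Coprime (2 ^ k) m := (Nat.coprime_two_left.2 hm).pow_left k
  rw [hcop.sum_divisors_mul] at hs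
  have h2 : ∑ i ∈ (2 ^ k).divisors, i = 2 ^ (k + 1) - 1 := by
    rw [Nat.sum_divisors_prime_pow Nat.prime_two, Nat.geomSum_eq (le_refl 2)]
    simp
  rw [h2] at hs
  obtain ⟨M, hM⟩ : ∃ M, 2 ^ (k + 1) = M + 1 := ⟨2 ^ (k + 1) - 1, by
    have := Nat.one_le_two_pow (n := k + 1); omega⟩
  have h4 : 2 ^ 2 ≤ 2 ^ (k + 1) := Nat.pow_le_pow_right (by norm_num) (by omega)
  have hs' : M * ∑ i ∈ m.divisors, i = (M + 1) * m := by
    rw [← hM, pow_succ]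
    rw [hM, Nat.add_sub_cancel] at hs
    rw [hs]; ring
  have hd : M ∣ m := by
    have : Nat.Coprime M (M + 1) := by simp
    exact this.dvd_of_dvd_mul_left ⟨_, hs'.symm⟩
  obtain ⟨j, rfl⟩ := hd
  have hMpos : 0 < M := by omega
  have hj : ∑ i ∈ (M * j).divisors, i = (M + 1) * j := by
    apply Nat.eq_of_mul_eq_mul_left hMpos
    rw [hs']; ring
  rw [Nat.sum_divisors_eq_sum_properDivisors_add_self] at hj
  have hj' : ∑ i ∈ (M * j).properDivisors, i = j := by
    rw [add_mul] at hj; omega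
  have hjpos : 0 < j := Nat.pos_of_ne_zero (by rintro rfl; simp at hpos)
  have := Nat.sum_properDivisors_dvd (n := M * j) (by rw [hj']; exact Dvd.intro_left M rfl)
  rw [hj'] at this
  rcases this with h | h
  · rw [h, hM]; simp
  · nlinarith

theorem stmt_1 (n δ : ℕ) (hδ : 2 ≤ δ) (heven : Even δ)
    (hn : Nat.Perfect n) (hnδ : Nat.Perfect (n + δ)) :
    ¬ δ ∣ n := by
  intro hd
  have hle : δ ≤ n := Nat.le_of_dvd hn.2 hd
  have hne : Even n := even_iff_two_dvd.2 (heven.two_dvd.trans hd)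
  obtain ⟨a, ha⟩ := even_perfect_form n hne hn
  obtain ⟨b, hb⟩ := even_perfect_form (n + δ) (hne.add heven) hnδ
  have hnpos := hn.2
  rcases Nat.lt_or_ge a b with h | h
  · have h1 : 2 ^ (a + 1) ≤ 2 ^ b := Nat.pow_le_pow_right (by norm_num) h
    have h2 : 2 ^ (a + 1) * (2 ^ (a + 1 + 1) - 1) ≤ 2 ^ b * (2 ^ (b + 1) - 1) := by
      gcongr <;> omega
    have h3 : 2 ^ (a + 1) * (2 ^ (a + 1) - 1) < 2 ^ (a + 1) * (2 ^ (a + 1 + 1) - 1) := by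
      apply Nat.mul_lt_mul_of_pos_left _ (by positivity)
      have := Nat.one_le_two_pow (n := a)
      simp only [pow_succ]; omega
    have h4 : 2 ^ (a + 1) * (2 ^ (a + 1) - 1) = 2 * n := by
      rw [ha, pow_succ]; ring
    omega
  · have h2 : 2 ^ b * (2 ^ (b + 1) - 1) ≤ 2 ^ a * (2 ^ (a + 1) - 1) := by
      gcongr <;> omega
    omega
end

section
/- If n and m are distinct perfect numbers, then |n - m| > 1; that is, two perfect numbers never differ by exactly 1. -/
/-- If `m` is `-1` modulo 3 or 4 then the modulus divides the sum of divisors. -/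
theorem sigma_neg_one (c m : ℕ) (hm : 0 < m)
    (h1 : ∀ a b : ZMod c, a * b = -1 → a + b = 0)
    (h2 : ∀ a : ZMod c, a * a ≠ -1) (h : (m : ZMod c) = -1) :
    c ∣ ∑ i ∈ Nat.divisors m, i := by
  rw [← ZMod.natCast_eq_zero_iff, Nat.cast_sum]
  have key : ∀ d ∈ Nat.divisors m, (d : ZMod c) * ((m / d : ℕ) : ZMod c) = -1 := by
    intro d hd
    rw [← Nat.cast_mul, Nat.mul_div_cancel' (Nat.dvd_of_mem_divisors hd), h]
  refine Finset.sum_involution (fun d _ => m / d) ?_ ?_ ?_ ?_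
  · intro d hd
    exact h1 _ _ (key d hd)
  · intro d hd _ he
    have hk := key d hd
    rw [he] at hk
    exact h2 _ hk
  · intro d hd
    exact Nat.mem_divisors.2 ⟨Nat.div_dvd_of_dvd (Nat.dvd_of_mem_divisors hd), hm.ne'⟩
  · intro d hd
    exact Nat.div_div_self (Nat.dvd_of_mem_divisors hd) hm.ne'

theorem perfect_mod_three (m : ℕ) (h : Nat.Perfect m) : m % 3 ≠ 2 := by
  intro h3
  have hs := (Nat.perfect_iff_sum_divisors_eq_two_mul h.2).1 h
  have hd := sigma_neg_one 3 m h.2 (by decide) (by decide) (by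
    rw [← ZMod.natCast_mod, h3]; decide)
  omega

theorem perfect_mod_four (m : ℕ) (h : Nat.Perfect m) : m % 4 ≠ 3 := by
  intro h3
  have hs := (Nat.perfect_iff_sum_divisors_eq_two_mul h.2).1 h
  have hd := sigma_neg_one 4 m h.2 (by decide) (by decide) (by
    rw [← ZMod.natCast_mod, h3]; decide)
  omega

/-- A perfect multiple of 6 is 6. -/
theorem perfect_six (n : ℕ) (h : Nat.Perfect n) (h6 : n % 6 = 0) : n = 6 := by
  obtain ⟨k, rfl⟩ : 6 ∣ n := Nat.dvd_of_mod_eq_zero h6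
  have hk : 0 < k := by have := h.2; omega
  by_contra hne
  have hs := h.1
  have hsub : ({1, k, 2 * k, 3 * k} : Finset ℕ) ⊆ Nat.properDivisors (6 * k) := by
    intro x hx
    simp only [Finset.mem_insert, Finset.mem_singleton] at hx
    rw [Nat.mem_properDivisors]
    rcases hx with rfl | rfl | rfl | rfl
    · exact ⟨one_dvd _, by omega⟩
    · exact ⟨⟨6, by ring⟩, by omega⟩
    · exact ⟨⟨3, by ring⟩, by omega⟩
    · exact ⟨⟨2, by ring⟩, by omega⟩
  have hle : ∑ i ∈ ({1, k, 2 * k, 3 * k} : Finset ℕ), i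
      ≤ ∑ i ∈ Nat.properDivisors (6 * k), i := Finset.sum_le_sum_of_subset hsub
  rw [Finset.sum_insert, Finset.sum_insert, Finset.sum_insert, Finset.sum_singleton] at hle
  · omega
  all_goals
    simp only [Finset.mem_insert, Finset.mem_singleton]
    omega

theorem perfect_even (n : ℕ) (h : Nat.Perfect n) (h2 : n % 2 = 0) :
    n = 6 ∨ (n % 3 = 1 ∧ n % 4 = 0) := by
  have h3 := perfect_mod_three n h
  have h6 := perfect_six n h
  by_cases h4 : n % 4 = 0
  · omega
  · left
    apply h6
    obtain ⟨k, rfl⟩ : 2 ∣ n := Nat.dvd_of_mod_eq_zero h2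
    have hs := (Nat.perfect_iff_sum_divisors_eq_two_mul h.2).1 h
    have hc : Nat.Coprime 2 k := by
      rw [Nat.coprime_two_left, Nat.odd_iff]; omega
    rw [hc.sum_divisors_mul] at hs
    have : ∑ i ∈ Nat.divisors 2, i = 3 := by decide
    rw [this] at hs
    omega

theorem perfect_aux (n m : ℕ) (hn : Nat.Perfect n) (hm : Nat.Perfect m)
    (h2 : n % 2 = 0) : m ≠ n + 1 ∧ n ≠ m + 1 := by
  have h3 := perfect_mod_three m hm
  have h4 := perfect_mod_four m hm
  have he := perfect_even n hn h2
  omega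

theorem stmt_3 (n m : ℕ) (hn : Nat.Perfect n) (hm : Nat.Perfect m) (hnm : n ≠ m) :
    1 < ((n : ℤ) - m).natAbs := by
  have h1 := perfect_aux n m hn hm
  have h2 := perfect_aux m n hm hn
  omega
end

section
/- If n and m are distinct perfect numbers, then |n - m| > 2. -/
lemma aux_pair (k n : ℕ) (hn0 : n ≠ 0)
    (hk : ∀ a b : ZMod k, a * b = (n : ZMod k) → a + b = 0)
    (hsq : ∀ a : ZMod k, a * a ≠ (n : ZMod k)) : k ∣ ∑ d ∈ n.divisors, d := by
  rw [← ZMod.natCast_eq_zero_iff]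
  push_cast
  refine Finset.sum_involution (fun d _ => n / d) ?_ ?_ ?_ ?_
  · intro d hd
    apply hk
    rw [← Nat.cast_mul, Nat.mul_div_cancel' (Nat.dvd_of_mem_divisors hd)]
  · intro d hd _ h
    apply hsq d
    have := Nat.mul_div_cancel' (Nat.dvd_of_mem_divisors hd)
    rw [h] at this
    rw [← Nat.cast_mul, this]
  · intro d hd
    exact Nat.mem_divisors.2 ⟨Nat.div_dvd_of_dvd (Nat.dvd_of_mem_divisors hd), hn0⟩
  · intro d hd
    exact Nat.div_div_self (Nat.dvd_of_mem_divisors hd) hn0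

lemma aux_three (n : ℕ) (hn : Nat.Perfect n) : n % 3 ≠ 2 := by
  intro h
  have hc : (n : ZMod 3) = 2 := by
    have := (ZMod.natCast_eq_natCast_iff' n 2 3).2 h
    exact_mod_cast this
  have hd : 3 ∣ ∑ d ∈ n.divisors, d := by
    apply aux_pair 3 n hn.2.ne'
    · rw [hc]; decide
    · rw [hc]; decide
  rw [(Nat.perfect_iff_sum_divisors_eq_two_mul hn.2).1 hn] at hd
  omega

lemma aux_four (n : ℕ) (hn : Nat.Perfect n) : n % 4 ≠ 3 := by
  intro h
  have hc : (n : ZMod 4) = 3 := by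
    have := (ZMod.natCast_eq_natCast_iff' n 3 4).2 h
    exact_mod_cast this
  have hd : 4 ∣ ∑ d ∈ n.divisors, d := by
    apply aux_pair 4 n hn.2.ne'
    · rw [hc]; decide
    · rw [hc]; decide
  rw [(Nat.perfect_iff_sum_divisors_eq_two_mul hn.2).1 hn] at hd
  omega

lemma aux_six (n : ℕ) (hn : Nat.Perfect n) (h : n % 6 = 0) : n = 6 := by
  obtain ⟨k, rfl⟩ := Nat.dvd_of_mod_eq_zero h
  have hpos := hn.2
  by_contra hne
  have hsub : ({1, k, 2 * k, 3 * k} : Finset ℕ) ⊆ (6 * k).properDivisors := by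
    intro x hx
    simp only [Finset.mem_insert, Finset.mem_singleton] at hx
    rw [Nat.mem_properDivisors]
    rcases hx with rfl | rfl | rfl | rfl
    · exact ⟨one_dvd _, by omega⟩
    · exact ⟨⟨6, by ring⟩, by omega⟩
    · exact ⟨⟨3, by ring⟩, by omega⟩
    · exact ⟨⟨2, by ring⟩, by omega⟩
  have hle := Finset.sum_le_sum_of_subset (f := fun d : ℕ => d) hsub
  have h1 := hn.1
  rw [Finset.sum_insert, Finset.sum_insert, Finset.sum_insert, Finset.sum_singleton] at hle
  · omega
  all_goals
    simp only [Finset.mem_insert, Finset.mem_singleton]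
    omega

lemma aux_two (n : ℕ) (hn : Nat.Perfect n) (h : n % 4 = 2) : n = 6 := by
  apply aux_six n hn
  have hs := (Nat.perfect_iff_sum_divisors_eq_two_mul hn.2).1 hn
  obtain ⟨q, rfl⟩ : 2 ∣ n := by omega
  have hco : Nat.Coprime 2 q := by
    rw [Nat.coprime_two_left, Nat.odd_iff]; omega
  rw [Nat.Coprime.sum_divisors_mul hco] at hs
  have : ∑ d ∈ Nat.divisors 2, d = 3 := by decide
  rw [this] at hs
  omega

theorem stmt_4 (n m : ℕ) (hn : Nat.Perfect n) (hm : Nat.Perfect m) (hnm : n ≠ m) :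
    2 < ((n : ℤ) - m).natAbs := by
  have key : ∀ k, Nat.Perfect k → k % 3 ≠ 2 ∧ k % 4 ≠ 3 ∧ (k % 4 = 2 → k = 6) ∧
      (k % 6 = 0 → k = 6) ∧ k ≠ 4 ∧ k ≠ 7 := by
    intro k hk
    refine ⟨aux_three k hk, aux_four k hk, aux_two k hk, aux_six k hk, ?_, ?_⟩
    · rintro rfl
      exact absurd hk.1 (by decide)
    · rintro rfl
      exact absurd hk.1 (by decide)
  have key2 : ∀ k, Nat.Perfect k →
      k = 6 ∨ (k ≠ 4 ∧ (k % 12 = 1 ∨ k % 12 = 4 ∨ k % 12 = 9)) := by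
    intro k hk
    have := key k hk
    have hr : k % 12 < 12 := Nat.mod_lt _ (by norm_num)
    generalize hx : k % 12 = r at hr
    interval_cases r <;> omega
  rcases key2 n hn with h1 | ⟨h1, h1 | h1 | h1⟩ <;>
    rcases key2 m hm with h2 | ⟨h2, h2 | h2 | h2⟩ <;> omega
end

section
/- If n and n + δ are both perfect numbers, δ ≡ 3 (mod 4), and n > 6, then gcd(δ, n) = 1. -/
theorem aux_three_mod_four (N : ℕ) (h : N % 4 = 3) : 4 ∣ ∑ i ∈ N.divisors, i := by
  have hN0 : N ≠ 0 := by rintro rfl; simp at h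
  rw [← ZMod.natCast_eq_zero_iff]
  push_cast
  have key : ∀ x y : ℕ, x * y = N → (x : ZMod 4) + y = 0 := by
    intro x y hxy
    have h3 : (x : ZMod 4) * y = 3 := by
      have : ((N : ℕ) : ZMod 4) = ((3 : ℕ) : ZMod 4) := by
        rw [ZMod.natCast_eq_natCast_iff']; omega
      rw [← hxy] at this
      push_cast at this
      exact this
    generalize (x : ZMod 4) = a at *
    generalize (y : ZMod 4) = b at *
    revert a b
    decide
  apply Finset.sum_involution (fun d _ => N / d)
  · intro a ha
    exact key a (N / a) (Nat.mul_div_cancel' (Nat.dvd_of_mem_divisors ha))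
  · intro a ha _ he
    have h1 := Nat.mul_div_cancel' (Nat.dvd_of_mem_divisors ha)
    rw [he] at h1
    have h2 : a % 4 = 0 ∨ a % 4 = 1 ∨ a % 4 = 2 ∨ a % 4 = 3 := by omega
    rw [← h1] at h
    rcases h2 with h2 | h2 | h2 | h2 <;> simp [Nat.mul_mod, h2] at h
  · intro a ha
    exact Nat.mem_divisors.2 ⟨Nat.div_dvd_of_dvd (Nat.dvd_of_mem_divisors ha), hN0⟩
  · intro a ha
    exact Nat.div_div_self (Nat.dvd_of_mem_divisors ha) hN0

theorem aux_even_perfect (N : ℕ) (hp : Nat.Perfect N) (he : Even N) :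
    ∃ k, 1 ≤ k ∧ (2 ^ (k + 1) - 1).Prime ∧ N = 2 ^ k * (2 ^ (k + 1) - 1) := by
  have hpos : 0 < N := hp.2
  obtain ⟨k, m, hm, rfl⟩ := Nat.exists_eq_two_pow_mul_odd hpos.ne'
  have hk : 1 ≤ k := by
    rcases Nat.eq_zero_or_pos k with rfl | h
    · exfalso
      rw [pow_zero, one_mul] at he
      exact (Nat.not_even_iff_odd.2 hm) he
    · exact h
  have hs := (Nat.perfect_iff_sum_divisors_eq_two_mul hpos).1 hp
  have hco : Nat.Coprime (2 ^ k) m := Nat.Coprime.pow_left _ (Nat.coprime_two_left.2 hm)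
  have h1 : ∀ n : ℕ, ∑ i ∈ n.divisors, i = ArithmeticFunction.sigma 1 n := by
    intro n; simp [ArithmeticFunction.sigma_one_apply]
  have h2 : ∑ i ∈ (2 ^ k).divisors, i = 2 ^ (k + 1) - 1 := by
    rw [Nat.sum_divisors_prime_pow Nat.prime_two, Nat.geomSum_eq le_rfl]; simp
  rw [h1, ArithmeticFunction.isMultiplicative_sigma.map_mul_of_coprime hco, ← h1, ← h1, h2,
    Nat.sum_divisors_eq_sum_properDivisors_add_self] at hs
  have hm0 : 0 < m := hm.pos
  obtain ⟨q, hq⟩ : ∃ q, 2 ^ (k + 1) = q + 1 :=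
    ⟨2 ^ (k + 1) - 1, (Nat.sub_add_cancel Nat.one_le_two_pow).symm⟩
  have hq3 : 3 ≤ q := by
    have : 2 ^ 2 ≤ 2 ^ (k + 1) := Nat.pow_le_pow_right (by norm_num) (by omega)
    omega
  have hs' : q * (∑ i ∈ m.properDivisors, i) = m := by
    have : 2 * (2 ^ k * m) = (q + 1) * m := by rw [← hq]; ring
    rw [this, hq, Nat.add_sub_cancel] at hs
    linarith
  rcases Nat.sum_properDivisors_dvd ⟨q, by rw [mul_comm]; exact hs'.symm⟩ with h | h
  · rw [h, mul_one] at hs'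
    exact ⟨k, hk, by rw [hq, Nat.add_sub_cancel, hs']; exact Nat.sum_properDivisors_eq_one_iff_prime.1 h,
      by rw [hq, Nat.add_sub_cancel, hs']⟩
  · rw [h] at hs'
    nlinarith

theorem stmt_5 (n δ : ℕ) (hδ : δ % 4 = 3) (hn6 : 6 < n)
    (hn : Nat.Perfect n) (hnδ : Nat.Perfect (n + δ)) :
    Nat.gcd δ n = 1 := by
  have hs := (Nat.perfect_iff_sum_divisors_eq_two_mul hn.2).1 hn
  rcases Nat.even_or_odd n with he | ho
  · exfalso
    obtain ⟨k, hk, -, hN⟩ := aux_even_perfect n hn he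
    have hk2 : 2 ≤ k := by
      by_contra hlt
      obtain rfl : k = 1 := by omega
      norm_num at hN
      omega
    have h4 : 4 ∣ n := by
      rw [hN]; exact Dvd.dvd.mul_right (pow_dvd_pow 2 hk2) _
    have h := aux_three_mod_four (n + δ) (by omega)
    rw [(Nat.perfect_iff_sum_divisors_eq_two_mul hnδ.2).1 hnδ] at h
    omega
  · have he : Even (n + δ) := by
      rw [Nat.even_iff]; rw [Nat.odd_iff] at ho; omega
    obtain ⟨k, hk, hp, hN⟩ := aux_even_perfect _ hnδ he
    obtain ⟨q, hq⟩ : ∃ q, 2 ^ (k + 1) = q + 1 :=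
      ⟨2 ^ (k + 1) - 1, (Nat.sub_add_cancel Nat.one_le_two_pow).symm⟩
    rw [hq, Nat.add_sub_cancel] at hp hN
    by_contra hg
    have hqn : q ∣ n := by
      by_contra hqn
      apply hg
      have h1 : Nat.Coprime (n + δ) n := by
        rw [hN]
        exact Nat.Coprime.mul_left (Nat.Coprime.pow_left _ (Nat.coprime_two_left.2 ho))
          ((Nat.Prime.coprime_iff_not_dvd hp).2 hqn)
      simpa using h1
    obtain ⟨m, rfl⟩ := hqn
    have hpow : 2 * 2 ^ k = q + 1 := by rw [← hq]; ring
    have hm0 : 0 < m := Nat.pos_of_ne_zero (by rintro rfl; simp at hn6)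
    have hq2 := hp.two_le
    have hmq : m < q := by
      by_contra hge
      nlinarith
    have hco : Nat.Coprime q m := (Nat.Prime.coprime_iff_not_dvd hp).2
      (fun h => absurd (Nat.le_of_dvd hm0 h) (by omega))
    have h1 : ∀ n : ℕ, ∑ i ∈ n.divisors, i = ArithmeticFunction.sigma 1 n := by
      intro n; simp [ArithmeticFunction.sigma_one_apply]
    rw [h1, ArithmeticFunction.isMultiplicative_sigma.map_mul_of_coprime hco, ← h1, ← h1,
      Nat.Prime.sum_divisors hp] at hs
    have h4 : 4 ∣ q + 1 := by
      rw [← hq]; exact pow_dvd_pow 2 (show 2 ≤ k + 1 by omega)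
    have h5 : 4 ∣ 2 * (q * m) := by
      rw [← hs]
      first
        | exact Dvd.dvd.mul_right h4 _
        | (rw [add_comm 1 q]; exact Dvd.dvd.mul_right h4 _)
    rw [Nat.odd_iff] at ho
    omega
end

section
/- No integer δ with δ ≡ 1 (mod 12) or δ ≡ 11 (mod 12) can be the distance between two perfect numbers; that is, if n and m are perfect numbers, then |n - m| is not congruent to ±1 modulo 12. -/
open Finset in
theorem key_aux (k n : ℕ) (hk : k = 3 ∨ k = 4) (hn : n % k = k - 1) :
    k ∣ ∑ i ∈ n.divisors, i := by
  have h0 : n ≠ 0 := by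
    rintro rfl
    rcases hk with rfl | rfl <;> simp at hn
  have hmod : ∀ d ∈ n.divisors, (d % k = 1 ∧ (n / d) % k = k - 1) ∨
      (d % k = k - 1 ∧ (n / d) % k = 1) := by
    intro d hd
    have hdn := Nat.mul_div_cancel' (Nat.dvd_of_mem_divisors hd)
    generalize n / d = e at *
    subst hdn
    rw [Nat.mul_mod] at hn
    rcases hk with rfl | rfl
    · have h1 := Nat.mod_lt d (show 3 > 0 by norm_num)
      have h2 := Nat.mod_lt e (show 3 > 0 by norm_num)
      interval_cases d % 3 <;> interval_cases e % 3 <;> simp_all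
    · have h1 := Nat.mod_lt d (show 4 > 0 by norm_num)
      have h2 := Nat.mod_lt e (show 4 > 0 by norm_num)
      interval_cases d % 4 <;> interval_cases e % 4 <;> simp_all
  let f : ℕ → ℤ := fun d => if d % k = 1 then 1 else -1
  have hs : ∑ d ∈ n.divisors, f d = 0 := by
    have h1 : ∑ d ∈ n.divisors, f (n / d) = ∑ d ∈ n.divisors, f d :=
      Nat.sum_div_divisors n f
    have h2 : ∑ d ∈ n.divisors, f (n / d) = ∑ d ∈ n.divisors, - f d := by
      refine sum_congr rfl fun d hd => ?_
      rcases hk with rfl | rfl <;> rcases hmod d hd with h | h <;> simp [f, h]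
    rw [sum_neg_distrib] at h2
    linarith
  have hd : (k : ℤ) ∣ ∑ d ∈ n.divisors, ((d : ℤ) - f d) := by
    refine dvd_sum fun d hd => ?_
    rcases hk with rfl | rfl <;> rcases hmod d hd with h | h <;> simp [f, h] <;> omega
  rw [sum_sub_distrib, hs, sub_zero] at hd
  rw [← Nat.cast_sum] at hd
  exact Int.natCast_dvd_natCast.1 hd

theorem perfect_sum {n : ℕ} (hn : Nat.Perfect n) : ∑ i ∈ n.divisors, i = 2 * n :=
  (Nat.perfect_iff_sum_divisors_eq_two_mul hn.2).1 hn

theorem perfect_mod3 {n : ℕ} (hn : Nat.Perfect n) : n % 3 ≠ 2 := by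
  intro h
  have := key_aux 3 n (Or.inl rfl) h
  rw [perfect_sum hn] at this
  omega

theorem perfect_mod4 {n : ℕ} (hn : Nat.Perfect n) : n % 4 ≠ 3 := by
  intro h
  have := key_aux 4 n (Or.inr rfl) h
  rw [perfect_sum hn] at this
  omega

theorem perfect_mod12_zero {n : ℕ} (hn : Nat.Perfect n) : n % 12 ≠ 0 := by
  intro h
  obtain ⟨t, rfl⟩ := Nat.dvd_of_mod_eq_zero h
  have hpos := hn.2
  have hs : ({6 * t, 4 * t, 3 * t, 2 * t} : Finset ℕ) ⊆ (12 * t).properDivisors := by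
    intro x hx
    simp only [Finset.mem_insert, Finset.mem_singleton] at hx
    rw [Nat.mem_properDivisors]
    rcases hx with rfl | rfl | rfl | rfl
    · exact ⟨⟨2, by ring⟩, by omega⟩
    · exact ⟨⟨3, by ring⟩, by omega⟩
    · exact ⟨⟨4, by ring⟩, by omega⟩
    · exact ⟨⟨6, by ring⟩, by omega⟩
  have h2 := Finset.sum_le_sum_of_subset (f := fun i => i) hs
  rw [hn.1, Finset.sum_insert (by simp; omega), Finset.sum_insert (by simp; omega),
    Finset.sum_insert (by simp; omega), Finset.sum_singleton] at h2
  omega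

theorem perfect_mod12_ten {n : ℕ} (hn : Nat.Perfect n) : n % 12 ≠ 10 := by
  intro h
  obtain ⟨t, rfl⟩ : 2 ∣ n := by omega
  have hc : Nat.Coprime 2 t := by
    rw [Nat.coprime_two_left, Nat.odd_iff]; omega
  have h1 := perfect_sum hn
  rw [Nat.Coprime.sum_divisors_mul hc] at h1
  have h2 : ∑ d ∈ Nat.divisors 2, d = 3 := by decide
  rw [h2] at h1
  omega

theorem stmt_6 (n m : ℕ) (hn : Nat.Perfect n) (hm : Nat.Perfect m) :
    ¬ (((n : ℤ) - m).natAbs % 12 = 1 ∨ ((n : ℤ) - m).natAbs % 12 = 11) := by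
  have a1 := perfect_mod3 hn
  have a2 := perfect_mod4 hn
  have a3 := perfect_mod12_zero hn
  have a4 := perfect_mod12_ten hn
  have b1 := perfect_mod3 hm
  have b2 := perfect_mod4 hm
  have b3 := perfect_mod12_zero hm
  have b4 := perfect_mod12_ten hm
  have cn : n % 12 = 1 ∨ n % 12 = 9 ∨ n % 12 = 4 ∨ n % 12 = 6 := by omega
  have cm : m % 12 = 1 ∨ m % 12 = 9 ∨ m % 12 = 4 ∨ m % 12 = 6 := by omega
  clear a1 a2 a3 a4 b1 b2 b3 b4
  rcases cn with cn | cn | cn | cn <;> rcases cm with cm | cm | cm | cm <;> omega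
end

section
/- Every odd perfect number n satisfies n ≡ 1 (mod 12) or n ≡ 9 (mod 12) (Touchard's theorem). -/
/-- If `n ≡ -1 (mod m)`, with `m = 3` or `m = 4`, then `m` divides the sum of the divisors of `n`. -/
theorem sum_divisors_dvd (m n : ℕ) (hm : m = 3 ∨ m = 4) (hn : n % m = m - 1) :
    m ∣ ∑ d ∈ n.divisors, d := by
  have key : ∀ d ∈ n.divisors,
      ((d % m = 1 ∧ (n / d) % m = m - 1) ∨ (d % m = m - 1 ∧ (n / d) % m = 1)) := by
    intro d hd
    have h : d * (n / d) = n := Nat.mul_div_cancel' (Nat.dvd_of_mem_divisors hd)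
    generalize n / d = e at h
    subst h
    rw [Nat.mul_mod] at hn
    rcases hm with rfl | rfl
    · have h1 : d % 3 < 3 := Nat.mod_lt _ (by norm_num)
      have h2 : e % 3 < 3 := Nat.mod_lt _ (by norm_num)
      generalize d % 3 = a at *
      generalize e % 3 = b at *
      interval_cases a <;> interval_cases b <;> simp_all
    · have h1 : d % 4 < 4 := Nat.mod_lt _ (by norm_num)
      have h2 : e % 4 < 4 := Nat.mod_lt _ (by norm_num)
      generalize d % 4 = a at *
      generalize e % 4 = b at *
      interval_cases a <;> interval_cases b <;> simp_all
  let f : ℕ → ℤ := fun d => if d % m = 1 then 1 else -1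
  have hne : m - 1 ≠ 1 := by omega
  have hsum : ∑ d ∈ n.divisors, f d = 0 := by
    have h1 : ∑ d ∈ n.divisors, f (n / d) = ∑ d ∈ n.divisors, f d := Nat.sum_div_divisors n f
    have h2 : ∑ d ∈ n.divisors, f (n / d) = ∑ d ∈ n.divisors, - f d := by
      refine Finset.sum_congr rfl fun d hd => ?_
      rcases key d hd with ⟨h, h'⟩ | ⟨h, h'⟩ <;> simp [f, h, h', hne]
    rw [Finset.sum_neg_distrib] at h2
    omega
  have h3 : (m : ℤ) ∣ ∑ d ∈ n.divisors, ((d : ℤ) - f d) := by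
    refine Finset.dvd_sum fun d hd => ?_
    rcases key d hd with ⟨h, _⟩ | ⟨h, _⟩
    · simp only [f, h, if_true]
      rcases hm with rfl | rfl <;> push_cast <;> omega
    · simp only [f, h, hne, if_false]
      rcases hm with rfl | rfl <;> push_cast <;> omega
  rw [Finset.sum_sub_distrib, hsum, sub_zero] at h3
  rw [← Nat.cast_sum] at h3
  exact Int.natCast_dvd_natCast.1 h3

theorem stmt_7 (n : ℕ) (hodd : Odd n) (hn : Nat.Perfect n) :
    n % 12 = 1 ∨ n % 12 = 9 := by
  have hs := (Nat.perfect_iff_sum_divisors_eq_two_mul hn.2).1 hn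
  have ho := Nat.odd_iff.1 hodd
  have h3 : n % 3 ≠ 2 := fun h => by
    have := sum_divisors_dvd 3 n (Or.inl rfl) h
    omega
  have h4 : n % 4 ≠ 3 := fun h => by
    have := sum_divisors_dvd 4 n (Or.inr rfl) h
    omega
  omega
end

section
/- Every odd perfect number n satisfies n ≡ 1 (mod 4). -/
theorem stmt_9 (n : ℕ) (hodd : Odd n) (hn : Nat.Perfect n) :
    n % 4 = 1 := by
  have hpos : 0 < n := hn.2
  have hs := (Nat.perfect_iff_sum_divisors_eq_two_mul hpos).1 hn
  by_contra hne
  have h3 : n % 4 = 3 := by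
    obtain ⟨k, hk⟩ := hodd
    omega
  have hn4 : (n : ZMod 4) = 3 := by
    have : ((n % 4 : ℕ) : ZMod 4) = (n : ZMod 4) := ZMod.natCast_mod n 4
    rw [← this, h3]; rfl
  -- two residues with product 3 modulo 4 sum to 0
  have key : ∀ a b : ZMod 4, a * b = 3 → a + b = 0 := by decide
  have nosq : ∀ a : ZMod 4, a * a ≠ 3 := by decide
  have hmul : ∀ d ∈ n.divisors, (d : ZMod 4) * ((n / d : ℕ) : ZMod 4) = 3 := by
    intro d hd
    rw [← Nat.cast_mul, Nat.mul_div_cancel' (Nat.dvd_of_mem_divisors hd), hn4]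
  have hzero : ∑ d ∈ n.divisors, (d : ZMod 4) = 0 := by
    refine Finset.sum_involution (fun d _ => n / d) ?_ ?_ ?_ ?_
    · intro d hd
      exact key _ _ (hmul d hd)
    · intro d hd _ he
      have := hmul d hd
      rw [he] at this
      exact nosq _ this
    · intro d hd
      exact Nat.mem_divisors.2 ⟨Nat.div_dvd_of_dvd (Nat.dvd_of_mem_divisors hd), hpos.ne'⟩
    · intro d hd
      exact Nat.div_div_self (Nat.dvd_of_mem_divisors hd) hpos.ne'
  rw [← Nat.cast_sum, hs, Nat.cast_mul, hn4] at hzero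
  exact absurd hzero (by decide)
end

section
/- There exist infinitely many triangular numbers δ with δ ≡ 3 (mod 12) such that the equation x - y = δ has no solution with x and y both perfect numbers. Precisely, the set of natural numbers δ such that δ = b(b-1)/2 for some natural number b, δ ≡ 3 (mod 12), and there are no perfect numbers x, y with x - y = δ, is infinite. -/
open ArithmeticFunction ArithmeticFunction.sigma in
/-- Euler's theorem on even perfect numbers. -/
lemma even_perfect {n : ℕ} (ev : Even n) (perf : Nat.Perfect n) :
    ∃ k : ℕ, Nat.Prime (2 ^ (k + 1) - 1) ∧ n = 2 ^ k * (2 ^ (k + 1) - 1) := by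
  have hpos := perf.2
  obtain ⟨k, m, hm, rfl⟩ := Nat.exists_eq_two_pow_mul_odd hpos.ne'
  refine ⟨k, ?_⟩
  have hcop : Nat.Coprime (2 ^ k) m := (Nat.coprime_two_left.mpr hm).pow_left k
  have hs2 : σ 1 (2 ^ k) = 2 ^ (k + 1) - 1 := by
    rw [sigma_one_apply_prime_pow Nat.prime_two, Nat.geomSum_eq (le_refl 2)]
    simp
  rw [Nat.perfect_iff_sum_divisors_eq_two_mul hpos, ← sigma_one_apply,
    isMultiplicative_sigma.map_mul_of_coprime hcop, hs2, ← mul_assoc, ← pow_succ'] at perf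
  have hge : 2 ≤ 2 ^ (k + 1) := by
    rw [pow_succ]; have := Nat.one_le_two_pow (n := k); omega
  obtain ⟨A, hA⟩ : ∃ A, 2 ^ (k + 1) = A + 1 := ⟨2 ^ (k + 1) - 1, by omega⟩
  have hk : k ≠ 0 := by
    rintro rfl
    simp at ev
    exact (Nat.not_even_iff_odd.mpr hm) ev
  have hA2 : A ≠ 1 := by
    obtain ⟨j, rfl⟩ := Nat.exists_eq_succ_of_ne_zero hk
    have := Nat.one_le_two_pow (n := j)
    simp only [Nat.succ_eq_add_one, pow_succ] at hA
    omega
  have hc2 : Nat.Coprime A (A + 1) := by simp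
  rw [hA] at perf ⊢
  simp only [Nat.add_sub_cancel] at perf ⊢
  obtain ⟨j, rfl⟩ := hc2.dvd_of_dvd_mul_left (Dvd.intro _ perf)
  have hA0 : 0 < A := by omega
  have hj0 : j ≠ 0 := by rintro rfl; simp at hm
  have h : σ 1 (A * j) = (A + 1) * j := by
    apply Nat.eq_of_mul_eq_mul_left hA0
    rw [perf]; ring
  rw [sigma_one_apply, Nat.sum_divisors_eq_sum_properDivisors_add_self] at h
  have hj : ∑ i ∈ (A * j).properDivisors, i = j := by linarith
  rcases Nat.sum_properDivisors_dvd (by rw [hj]; exact Dvd.intro_left A rfl) with h1 | h1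
  · have j1 : j = 1 := hj.symm.trans h1
    rw [j1, mul_one, Nat.sum_properDivisors_eq_one_iff_prime] at h1
    simp [h1, j1]
  · have : 1 * j = A * j := by rw [one_mul]; exact hj.symm.trans h1
    exact absurd (Nat.eq_of_mul_eq_mul_right (Nat.pos_of_ne_zero hj0) this).symm hA2

/-- An odd number with odd divisor sum is a square. -/
lemma square_of_odd_sum {n : ℕ} (hn : Odd n) (h : ¬ 2 ∣ ∑ d ∈ n.divisors, d) :
    ∃ w, n = w * w := by
  by_contra hcon
  push Not at hcon
  apply h
  have hn0 : n ≠ 0 := by rintro rfl; simp at hn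
  rw [← ZMod.natCast_eq_zero_iff]
  push_cast
  refine Finset.sum_involution (fun d _ => n / d) ?_ ?_ ?_ ?_
  · intro d hd
    have hdn := Nat.mul_div_cancel' (Nat.dvd_of_mem_divisors hd)
    have h1 : (n / d + d) % 2 = 0 := by
      have : Odd (d * (n / d)) := by rw [hdn]; exact hn
      rw [Nat.odd_mul] at this
      obtain ⟨⟨a, ha⟩, ⟨b, hb⟩⟩ := this
      omega
    have : ((d + n / d : ℕ) : ZMod 2) = 0 := by
      rw [ZMod.natCast_eq_zero_iff]; omega
    exact_mod_cast this
  · intro d hd _ he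
    have hdn := Nat.mul_div_cancel' (Nat.dvd_of_mem_divisors hd)
    rw [he] at hdn
    exact hcon d hdn.symm
  · intro d hd
    exact Nat.mem_divisors.mpr ⟨Nat.div_dvd_of_dvd (Nat.dvd_of_mem_divisors hd), hn0⟩
  · intro d hd
    exact Nat.div_div_self (Nat.dvd_of_mem_divisors hd) hn0

/-- The divisor sum of a number that is 3 mod 4 is divisible by 4. -/
lemma four_dvd_sum {n : ℕ} (hn : n % 4 = 3) : 4 ∣ ∑ d ∈ n.divisors, d := by
  have hn0 : n ≠ 0 := by rintro rfl; simp at hn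
  have key : ∀ d ∈ n.divisors, (d + n / d) % 4 = 0 ∧ n / d ≠ d := by
    intro d hd
    have hdn := Nat.mul_div_cancel' (Nat.dvd_of_mem_divisors hd)
    generalize n / d = e at *
    have h3 : ((d % 4) * (e % 4)) % 4 = 3 := by rw [← Nat.mul_mod, hdn, hn]
    have hd4 : d % 4 < 4 := Nat.mod_lt _ (by norm_num)
    have he4 : e % 4 < 4 := Nat.mod_lt _ (by norm_num)
    have : (d % 4 = 1 ∧ e % 4 = 3) ∨ (d % 4 = 3 ∧ e % 4 = 1) := by
      interval_cases d % 4 <;> interval_cases e % 4 <;> simp_all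
    constructor
    · omega
    · rintro rfl; omega
  rw [← ZMod.natCast_eq_zero_iff]
  push_cast
  refine Finset.sum_involution (fun d _ => n / d) ?_ ?_ ?_ ?_
  · intro d hd
    have : ((d + n / d : ℕ) : ZMod 4) = 0 := by
      rw [ZMod.natCast_eq_zero_iff]; exact Nat.dvd_of_mod_eq_zero (key d hd).1
    exact_mod_cast this
  · intro d hd _
    exact (key d hd).2
  · intro d hd
    exact Nat.mem_divisors.mpr ⟨Nat.div_dvd_of_dvd (Nat.dvd_of_mem_divisors hd), hn0⟩
  · intro d hd
    exact Nat.div_div_self (Nat.dvd_of_mem_divisors hd) hn0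

/-- The shape of an even perfect number. -/
lemma even_perfect_shape {n : ℕ} (ev : Even n) (perf : Nat.Perfect n) :
    n = 6 ∨ ∃ k M : ℕ, 1 ≤ k ∧ M = 4 ^ k ∧ (k % 3 = 1 → M = 4) ∧ n + M = 2 * M * M := by
  obtain ⟨k, hp, rfl⟩ := even_perfect ev perf
  have hk1 : k + 1 ≠ 1 := by
    rintro h
    rw [h] at hp; norm_num at hp
  have hpr := (Nat.prime_of_pow_sub_one_prime hk1 hp).2
  rcases hpr.eq_two_or_odd' with h2 | ⟨r, hr⟩
  · left
    have : k = 1 := by omega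
    subst this; norm_num
  · right
    have hk : k = 2 * r := by omega
    subst hk
    refine ⟨r, 4 ^ r, by omega, rfl, ?_, ?_⟩
    · intro h3
      have h3d : 3 ∣ 2 * r + 1 := by omega
      have := (Nat.prime_dvd_prime_iff_eq Nat.prime_three hpr).mp h3d
      have : r = 1 := by omega
      subst this; norm_num
    · have e1 : 2 ^ (2 * r) = 4 ^ r := by rw [pow_mul]; norm_num
      rw [pow_succ, e1]
      have : 1 ≤ 4 ^ r := Nat.one_le_pow _ _ (by norm_num)
      generalize 4 ^ r = M at *
      obtain ⟨c, rfl⟩ : ∃ c, M = c + 1 := ⟨M - 1, by omega⟩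
      have : (c + 1) * 2 - 1 = 2 * c + 1 := by omega
      rw [this]; ring

lemma sq_mod_eight {w : ℕ} (h : (w * w) % 2 = 1) : (w * w) % 8 = 1 := by
  have : (w * w) % 2 = ((w % 8) * (w % 8)) % 8 % 2 := by
    rw [← Nat.mul_mod]; omega
  rw [Nat.mul_mod]
  rw [h] at this
  have h8 : w % 8 < 8 := Nat.mod_lt _ (by norm_num)
  interval_cases w % 8 <;> omega

lemma sq_mod_seven (w : ℕ) :
    (w * w) % 7 = 0 ∨ (w * w) % 7 = 1 ∨ (w * w) % 7 = 2 ∨ (w * w) % 7 = 4 := by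
  rw [Nat.mul_mod]
  have h8 : w % 7 < 7 := Nat.mod_lt _ (by norm_num)
  interval_cases w % 7 <;> simp

lemma eleven_pow_mod (a : ℕ) :
    (11 ^ a % 8 = 1 ∧ ∃ c, 11 ^ a = c * c) ∨ 11 ^ a % 8 = 3 := by
  rcases Nat.even_or_odd' a with ⟨c, rfl | rfl⟩
  · left
    refine ⟨?_, 11 ^ c, by ring⟩
    rw [pow_mul, Nat.pow_mod]; norm_num
  · right
    rw [pow_succ, pow_mul, Nat.mul_mod, Nat.pow_mod]; norm_num

/-- If an odd perfect number is `u * v` with `u ≡ 5 (mod 8)`, `v ≡ 1 (mod 4)` and only 11 can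
be a common prime factor of `u` and `v`, then `v` is a square. -/
lemma v_square {u v : ℕ} (hu : u % 8 = 5) (hv : v % 4 = 1)
    (hg : ∀ p : ℕ, p.Prime → p ∣ u → p ∣ v → p = 11) (hperf : Nat.Perfect (u * v)) :
    ∃ w, v = w * w := by
  have p11 : Nat.Prime 11 := by norm_num
  obtain ⟨a, u', hu', rfl⟩ := Nat.exists_eq_pow_mul_and_not_dvd (n := u) (by omega) 11 (by norm_num)
  obtain ⟨c, v', hv', rfl⟩ := Nat.exists_eq_pow_mul_and_not_dvd (n := v) (by omega) 11 (by norm_num)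
  have hodd_u : Odd u' := by
    have : Odd (11 ^ a * u') := Nat.odd_iff.mpr (by omega)
    exact (Nat.odd_mul.mp this).2
  have hodd_v : Odd v' := by
    have : Odd (11 ^ c * v') := Nat.odd_iff.mpr (by omega)
    exact (Nat.odd_mul.mp this).2
  have c1 : Nat.Coprime u' v' := by
    apply Nat.Coprime.symm
    refine Nat.coprime_of_dvd fun p hp h1 h2 => ?_
    have := hg p hp (h2.mul_left _) (h1.mul_left _)
    subst this
    exact hu' h2
  have c2 : Nat.Coprime (11 ^ (a + c)) (u' * v') := by
    apply Nat.Coprime.pow_left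
    rw [Nat.Prime.coprime_iff_not_dvd p11, p11.dvd_mul]
    tauto
  have hs := (Nat.perfect_iff_sum_divisors_eq_two_mul hperf.2).mp hperf
  have e : 11 ^ a * u' * (11 ^ c * v') = 11 ^ (a + c) * (u' * v') := by ring
  have hodd : Odd (11 ^ a * u' * (11 ^ c * v')) :=
    (Nat.odd_iff.mpr (by omega)).mul (Nat.odd_iff.mpr (by omega))
  have hs' := hs
  rw [e, Nat.Coprime.sum_divisors_mul c2, Nat.Coprime.sum_divisors_mul c1, ← e] at hs'
  have hor : (¬ 2 ∣ ∑ d ∈ u'.divisors, d) ∨ (¬ 2 ∣ ∑ d ∈ v'.divisors, d) := by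
    by_contra hcon
    push Not at hcon
    have h4 : 2 * 2 ∣ (∑ d ∈ u'.divisors, d) * ∑ d ∈ v'.divisors, d := mul_dvd_mul hcon.1 hcon.2
    have h4' := h4.mul_left (∑ d ∈ (11 ^ (a + c)).divisors, d)
    rw [hs'] at h4'
    obtain ⟨z, hz⟩ := hodd
    omega
  rcases hor with h | h
  · exfalso
    obtain ⟨w, rfl⟩ := square_of_odd_sum hodd_u h
    have hw := sq_mod_eight (Nat.odd_iff.mp hodd_u)
    rw [Nat.mul_mod, hw] at hu
    rcases eleven_pow_mod a with ⟨h1, _⟩ | h1 <;> rw [h1] at hu <;> norm_num at hu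
  · obtain ⟨w, rfl⟩ := square_of_odd_sum hodd_v h
    have hw := sq_mod_eight (Nat.odd_iff.mp hodd_v)
    rcases eleven_pow_mod c with ⟨_, z, hz⟩ | h1
    · exact ⟨z * w, by rw [hz]; ring⟩
    · exfalso
      have : (11 ^ c * (w * w)) % 8 = 3 := by rw [Nat.mul_mod, hw, h1]
      omega

lemma four_pow_mod (k : ℕ) : 4 ^ k % 7 = 1 ∧ k % 3 = 0 ∨ 4 ^ k % 7 = 4 ∧ k % 3 = 1 ∨
    4 ^ k % 7 = 2 ∧ k % 3 = 2 := by
  induction k with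
  | zero => simp
  | succ n ih => rw [pow_succ]; omega

lemma main_aux {s j : ℕ} (hs : 1 ≤ s) (hN : 11 ^ j = 1008 * s + 11) :
    ¬ ∃ x y : ℕ, Nat.Perfect x ∧ Nat.Perfect y ∧ x - y = (252 * s + 3) * (504 * s + 5) := by
  rintro ⟨x, y, hx, hy, hxy⟩
  obtain ⟨δ, hδ⟩ : ∃ δ, δ = (252 * s + 3) * (504 * s + 5) := ⟨_, rfl⟩
  have hδ' : δ = 36 * (3528 * s * s + 77 * s) + 15 := by rw [hδ]; ring
  have hbig : 15 ≤ δ := by omega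
  rw [← hδ] at hxy
  have hxy' : x = y + δ := by omega
  have hsx := (Nat.perfect_iff_sum_divisors_eq_two_mul hx.2).mp hx
  rcases Nat.even_or_odd x with ex | ox
  · rcases even_perfect_shape ex hx with rfl | ⟨k, M, hk, hM, hM4, hxM⟩
    · omega
    have h7 := four_pow_mod k
    have hM4d : M % 4 = 0 := by
      obtain ⟨r, rfl⟩ := Nat.exists_eq_add_of_le hk
      rw [hM, pow_add]; omega
    rw [← hM] at h7
    have hlt : 252 * s + 3 < M := by
      by_contra hcon
      push Not at hcon
      have hy0 := hy.2
      have : 2 * M * M ≤ M + δ := by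
        rw [hδ]; nlinarith
      omega
    obtain ⟨v, rfl⟩ := Nat.exists_eq_add_of_lt hlt
    have hyuv : y = (2 * (252 * s + 3 + v + 1) + 504 * s + 5) * (v + 1) := by
      have : y + δ + (252 * s + 3 + v + 1) =
        2 * (252 * s + 3 + v + 1) * (252 * s + 3 + v + 1) := by rw [← hxy']; exact hxM
      rw [hδ] at this
      nlinarith
    rw [hyuv] at hy
    obtain ⟨w, hw⟩ := v_square (by omega) (by omega) (by
      intro p hp h1 h2
      have h3 : p ∣ 11 ^ j := by
        rw [hN]
        have e : 2 * (252 * s + 3 + v + 1) + 504 * s + 5 = 2 * (v + 1) + (1008 * s + 11) := by ring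
        rw [e] at h1
        exact (Nat.dvd_add_right (h2.mul_left 2)).mp h1
      exact (Nat.prime_dvd_prime_iff_eq hp (by norm_num)).mp (hp.dvd_of_dvd_pow h3)) hy
    have := sq_mod_seven w
    rw [← hw] at this
    omega
  · have ey : Even y := by
      rw [Nat.even_iff]; rw [Nat.odd_iff] at ox; omega
    rcases even_perfect_shape ey hy with rfl | ⟨k, M, hk, hM, hM4, hyM⟩
    · obtain ⟨r, hr⟩ : ∃ r, x = 3 * r := ⟨x / 3, by omega⟩
      have hc : Nat.Coprime 3 r := by
        rw [Nat.Prime.coprime_iff_not_dvd Nat.prime_three]; omega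
      rw [hr, Nat.Coprime.sum_divisors_mul hc] at hsx
      have h4 : 4 ∣ ∑ d ∈ Nat.divisors 3, d := four_dvd_sum (by norm_num)
      have h5 := h4.mul_right (∑ d ∈ r.divisors, d)
      rw [hsx, ← hr] at h5
      rw [Nat.odd_iff] at ox
      omega
    · have hM4d : M % 4 = 0 := by
        obtain ⟨r, rfl⟩ := Nat.exists_eq_add_of_le hk
        rw [hM, pow_add]; omega
      have hy4 : y % 4 = 0 := by
        obtain ⟨r, rfl⟩ := Nat.dvd_of_mod_eq_zero hM4d
        have : 2 * (4 * r) * (4 * r) = 4 * (8 * r * r) := by ring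
        omega
      have h4 := four_dvd_sum (n := x) (by omega)
      rw [hsx] at h4
      omega

lemma pow_family (t : ℕ) : ∃ s, t + 1 ≤ s ∧ 11 ^ (12 * (t + 1) + 1) = 1008 * s + 11 := by
  induction t with
  | zero => exact ⟨11 * (11 ^ 12 - 1) / 1008, by norm_num, by norm_num⟩
  | succ n ih =>
    obtain ⟨s, hs, h⟩ := ih
    refine ⟨11 ^ 12 * s + 11 * (11 ^ 12 - 1) / 1008, by omega, ?_⟩
    have : 12 * (n + 1 + 1) + 1 = (12 * (n + 1) + 1) + 12 := by ring
    rw [this, pow_add, h]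
    norm_num
    ring

theorem stmt_10 :
    {δ : ℕ | (∃ b : ℕ, δ = b * (b - 1) / 2) ∧ δ % 12 = 3 ∧
      ¬ ∃ x y : ℕ, Nat.Perfect x ∧ Nat.Perfect y ∧ x - y = δ}.Infinite := by
  rw [Set.infinite_iff_exists_gt]
  intro t
  obtain ⟨s, hs, hN⟩ := pow_family t
  refine ⟨(252 * s + 3) * (504 * s + 5), ⟨⟨504 * s + 6, ?_⟩, ?_, main_aux (by omega) hN⟩, ?_⟩
  · have : (504 * s + 6) * (504 * s + 6 - 1) = 2 * ((252 * s + 3) * (504 * s + 5)) := by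
      have : 504 * s + 6 - 1 = 504 * s + 5 := by omega
      rw [this]; ring
    omega
  · have : (252 * s + 3) * (504 * s + 5) = 36 * (3528 * s * s + 77 * s) + 15 := by ring
    omega
  · nlinarith
end

section
/- If p is an odd natural number and x is a natural number such that 2^(p-1) - 15 = x^2, then p = 5 or p = 7. -/
theorem stmt_19 (p x : ℕ) (hp : Odd p) (hx : (2 : ℤ) ^ (p - 1) - 15 = x ^ 2) :
    p = 5 ∨ p = 7 := by
  obtain ⟨k, rfl⟩ := hp
  have e : 2 * k + 1 - 1 = k * 2 := by omega
  rw [e, pow_mul] at hx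
  have hy : (0 : ℤ) < 2 ^ k := by positivity
  have hx0 : (0 : ℤ) ≤ x := by positivity
  have hlt : (x : ℤ) < 2 ^ k := by nlinarith
  have h8 : (2 : ℤ) ^ k ≤ 8 := by nlinarith
  have hk : k ≤ 3 := by
    by_contra h
    have : (2 : ℤ) ^ 4 ≤ 2 ^ k := pow_le_pow_right₀ (by norm_num) (by omega)
    omega
  interval_cases k
  · nlinarith
  · nlinarith
  · left; rfl
  · right; rfl
end
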